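/- Let s ∈ ℍ and define S : ℍ → ℍ by S(y) = (s − ȳ) · (s² − 2(re y)·s + ‖y‖²)⁻¹ (the left slice-hyperholomorphic Cauchy kernel in form II). Then on the open set U = {y ∈ ℍ : s² − 2(re y)·s + ‖y‖² ≠ 0} the function S is infinitely differentiable, and for every x ∈ U its Laplacian satisfies (Δ S)(x) := Σ_{μ=0}^{3} ∂_μ(∂_μ S)(x) = −4 · (s − x̄) · (s² − 2(re x)·s + ‖x‖²)^{−2}. -/

import Mathlib

/-!
The Leibniz rule `Δ(P·R) = P·ΔR + 2·Γ(P, R) + ΔP·R`, where `Γ(P, R) = Σ_μ ∂_μP · ∂_μR`, reduces the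
claim to a single cross term.  Write `P(y) = s − ȳ` and `Q = Q_{c,s}`.  Here `ΔP = 0`, and all
partial derivatives of `Q` commute with `Q`, so
`Δ(Q⁻¹) = Q⁻¹ · (2·Γ(Q, Q)·Q⁻¹ − ΔQ) · Q⁻¹`, and this vanishes because `Γ(Q, Q) = 4Q` and `ΔQ = 8`:
in dimension four `Q⁻¹` is harmonic.  What remains is
`ΔS = 2·Γ(P, Q⁻¹) = −2·Γ(P, Q)·Q⁻²`, with `Γ(P, Q) = 2·(s − x̄)`.
-/

open Quaternion

/-- The basis quaternion `i`. -/
def qi : ℍ[ℝ] := ⟨0, 1, 0, 0⟩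
/-- The basis quaternion `j`. -/
def qj : ℍ[ℝ] := ⟨0, 0, 1, 0⟩
/-- The basis quaternion `k`. -/
def qk : ℍ[ℝ] := ⟨0, 0, 0, 1⟩

/-- The Laplacian `(Δ F)(x) = Σ_{μ=0}^{3} ∂_μ(∂_μ F)(x)`, where `∂_μF(x)` is the real Fréchet
derivative of `F` at `x` applied to the basis quaternion `e_μ` (`e₀ = 1, e₁ = i, e₂ = j,
e₃ = k`). -/
noncomputable def lap (F : ℍ[ℝ] → ℍ[ℝ]) (x : ℍ[ℝ]) : ℍ[ℝ] :=
  fderiv ℝ (fun y => fderiv ℝ F y 1) x 1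
    + fderiv ℝ (fun y => fderiv ℝ F y qi) x qi
    + fderiv ℝ (fun y => fderiv ℝ F y qj) x qj
    + fderiv ℝ (fun y => fderiv ℝ F y qk) x qk

/-- The commutative pseudo-Cauchy kernel `Q_{c,s}(y) = s² − 2(re y)·s + ‖y‖²`. -/
noncomputable def Qcs (s y : ℍ[ℝ]) : ℍ[ℝ] :=
  s ^ 2 - 2 * ((y.re : ℝ) : ℍ[ℝ]) * s + ((‖y‖ ^ 2 : ℝ) : ℍ[ℝ])

section DirectionalDerivatives

variable {𝕜 E 𝔸 : Type*} [NontriviallyNormedField 𝕜] [NormedAddCommGroup E] [NormedSpace 𝕜 E]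

theorem fderiv_mul_apply [NormedRing 𝔸] [NormedAlgebra 𝕜 𝔸] {f g : E → 𝔸} {x : E}
    (hf : DifferentiableAt 𝕜 f x) (hg : DifferentiableAt 𝕜 g x) (e : E) :
    fderiv 𝕜 (fun y => f y * g y) x e = f x * fderiv 𝕜 g x e + fderiv 𝕜 f x e * g x := by
  simp [fderiv_fun_mul' hf hg]

theorem differentiableAt_fderiv_apply {F : Type*} [NormedAddCommGroup F] [NormedSpace 𝕜 F]
    {f : E → F} {x : E} (hf : ContDiffAt 𝕜 2 f x) (e : E) :
    DifferentiableAt 𝕜 (fun y => fderiv 𝕜 f y e) x :=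
  ((hf.fderiv_right (m := 1) (by norm_num)).differentiableAt one_ne_zero).clm_apply
    (differentiableAt_const e)

theorem fderiv_fderiv_mul_apply [NormedRing 𝔸] [NormedAlgebra 𝕜 𝔸] {f g : E → 𝔸} {x : E}
    (hf : ContDiffAt 𝕜 2 f x) (hg : ContDiffAt 𝕜 2 g x) (e : E) :
    fderiv 𝕜 (fun y => fderiv 𝕜 (fun z => f z * g z) y e) x e =
      f x * fderiv 𝕜 (fun y => fderiv 𝕜 g y e) x e + 2 * (fderiv 𝕜 f x e * fderiv 𝕜 g x e) +
        fderiv 𝕜 (fun y => fderiv 𝕜 f y e) x e * g x := by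
  have leibniz : (fun y => fderiv 𝕜 (fun z => f z * g z) y e) =ᶠ[nhds x]
      fun y => f y * fderiv 𝕜 g y e + fderiv 𝕜 f y e * g y := by
    filter_upwards [hf.eventually (by simp), hg.eventually (by simp)] with y hfy hgy
    exact fderiv_mul_apply (hfy.differentiableAt two_ne_zero) (hgy.differentiableAt two_ne_zero) e
  have hf₁ := hf.differentiableAt two_ne_zero
  have hg₁ := hg.differentiableAt two_ne_zero
  have hf₂ := differentiableAt_fderiv_apply hf e
  have hg₂ := differentiableAt_fderiv_apply hg e
  rw [leibniz.fderiv_eq, fderiv_fun_add (hf₁.fun_mul hg₂) (hf₂.fun_mul hg₁),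
    add_apply, fderiv_mul_apply hf₁ hg₂, fderiv_mul_apply hf₂ hg₁]
  noncomm_ring

variable [NormedDivisionRing 𝔸] [NormedAlgebra 𝕜 𝔸]

theorem fderiv_inv_apply' {f : E → 𝔸} {x : E} (hf : DifferentiableAt 𝕜 f x) (hx : f x ≠ 0)
    (e : E) :
    fderiv 𝕜 (fun y => (f y)⁻¹) x e = -((f x)⁻¹ * fderiv 𝕜 f x e * (f x)⁻¹) :=
  congrArg (· e) ((hasFDerivAt_inv' hx).comp x hf.hasFDerivAt).fderiv

theorem contDiffAt_fun_inv' [CompleteSpace 𝔸] {n : WithTop ℕ∞} {f : E → 𝔸} {x : E}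
    (hf : ContDiffAt 𝕜 n f x) (hx : f x ≠ 0) : ContDiffAt 𝕜 n (fun y => (f y)⁻¹) x := by
  have h := contDiffAt_ringInverse 𝕜 (n := n) (Units.mk0 _ hx)
  rw [Ring.inverse_eq_inv', Units.val_mk0] at h
  exact h.comp x hf

end DirectionalDerivatives

/-- The carré du champ `Γ(f, g)(x) = Σ_{μ=0}^{3} ∂_μf(x) · ∂_μg(x)`, the cross term in the Leibniz
rule for `lap`.  It is not symmetric, since the factors need not commute. -/
noncomputable def carreDuChamp (f g : ℍ[ℝ] → ℍ[ℝ]) (x : ℍ[ℝ]) : ℍ[ℝ] :=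
  fderiv ℝ f x 1 * fderiv ℝ g x 1 + fderiv ℝ f x qi * fderiv ℝ g x qi
    + fderiv ℝ f x qj * fderiv ℝ g x qj + fderiv ℝ f x qk * fderiv ℝ g x qk

section Laplacian

variable {f g : ℍ[ℝ] → ℍ[ℝ]} {x : ℍ[ℝ]}

theorem lap_congr (h : f =ᶠ[nhds x] g) : lap f x = lap g x := by
  have hd (e : ℍ[ℝ]) : (fun y => fderiv ℝ f y e) =ᶠ[nhds x] fun y => fderiv ℝ g y e :=
    h.fderiv.fun_comp (· e)
  simp only [lap, (hd _).fderiv_eq]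

theorem lap_const (c : ℍ[ℝ]) : lap (fun _ => c) x = 0 := by
  simp [lap]

theorem lap_mul (hf : ContDiffAt ℝ 2 f x) (hg : ContDiffAt ℝ 2 g x) :
    lap (fun y => f y * g y) x = f x * lap g x + 2 * carreDuChamp f g x + lap f x * g x := by
  simp only [lap, carreDuChamp, fderiv_fderiv_mul_apply hf hg]
  noncomm_ring

theorem carreDuChamp_inv_right (hg : DifferentiableAt ℝ g x) (hx : g x ≠ 0)
    (hcomm : ∀ e, Commute (fderiv ℝ g x e) (g x)) :
    carreDuChamp f (fun y => (g y)⁻¹) x = -(carreDuChamp f g x * (g x ^ 2)⁻¹) := by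
  have hd (e : ℍ[ℝ]) : fderiv ℝ (fun y => (g y)⁻¹) x e = -(fderiv ℝ g x e * (g x ^ 2)⁻¹) := by
    rw [fderiv_inv_apply' hg hx, ← (hcomm e).inv_right₀.eq, mul_assoc, ← mul_inv_rev, ← sq]
  simp only [carreDuChamp, hd]
  noncomm_ring

theorem lap_inv (hf : ContDiffAt ℝ 2 f x) (hx : f x ≠ 0)
    (hcomm : ∀ e, Commute (fderiv ℝ f x e) (f x)) :
    lap (fun y => (f y)⁻¹) x =
      (f x)⁻¹ * (2 * carreDuChamp f f x * (f x)⁻¹ - lap f x) * (f x)⁻¹ := by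
  have hone : (fun y => f y * (f y)⁻¹) =ᶠ[nhds x] fun _ => 1 := by
    filter_upwards [hf.continuousAt.eventually_ne hx] with y hy using mul_inv_cancel₀ hy
  -- Applying the Leibniz rule to `f · f⁻¹ = 1` avoids differentiating `f⁻¹` twice.
  have hleibniz := lap_mul hf (contDiffAt_fun_inv' hf hx)
  rw [lap_congr hone, lap_const, carreDuChamp_inv_right (hf.differentiableAt two_ne_zero) hx hcomm,
    add_assoc] at hleibniz
  rw [← inv_mul_cancel_left₀ hx (lap _ x), eq_neg_of_add_eq_zero_left hleibniz.symm, sq,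
    mul_inv_rev]
  noncomm_ring

end Laplacian

theorem coe_ofNat_quaternion (n : ℕ) [n.AtLeastTwo] : ((ofNat(n) : ℝ) : ℍ[ℝ]) = ofNat(n) :=
  map_ofNat (algebraMap ℝ ℍ[ℝ]) n

theorem components_qi : qi.re = 0 ∧ qi.imI = 1 ∧ qi.imJ = 0 ∧ qi.imK = 0 :=
  ⟨rfl, rfl, rfl, rfl⟩

theorem components_qj : qj.re = 0 ∧ qj.imI = 0 ∧ qj.imJ = 1 ∧ qj.imK = 0 :=
  ⟨rfl, rfl, rfl, rfl⟩

theorem components_qk : qk.re = 0 ∧ qk.imI = 0 ∧ qk.imJ = 0 ∧ qk.imK = 1 :=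
  ⟨rfl, rfl, rfl, rfl⟩

theorem inner_eq_components (a b : ℍ[ℝ]) :
    inner ℝ a b = a.re * b.re + a.imI * b.imI + a.imJ * b.imJ + a.imK * b.imK := by
  simp [Quaternion.inner_def]

theorem inner_one_right (x : ℍ[ℝ]) : inner ℝ x 1 = x.re := by
  simp [inner_eq_components]

theorem inner_qi_right (x : ℍ[ℝ]) : inner ℝ x qi = x.imI := by
  simp [inner_eq_components, components_qi]

theorem inner_qj_right (x : ℍ[ℝ]) : inner ℝ x qj = x.imJ := by
  simp [inner_eq_components, components_qj]

theorem inner_qk_right (x : ℍ[ℝ]) : inner ℝ x qk = x.imK := by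
  simp [inner_eq_components, components_qk]

theorem star_eq_sum_components (x : ℍ[ℝ]) :
    star x = x.re + star qi * x.imI + star qj * x.imJ + star qk * x.imK := by
  ext <;> simp [components_qi, components_qj, components_qk]

theorem Qcs_eq_smul (s y : ℍ[ℝ]) :
    Qcs s y = s ^ 2 - (2 * inner ℝ 1 y : ℝ) • s + (‖y‖ ^ 2) • (1 : ℍ[ℝ]) := by
  rw [Qcs, real_inner_comm, inner_one_right, ← Quaternion.coe_mul_eq_smul,
    ← Quaternion.coe_mul_eq_smul, mul_one, Quaternion.coe_mul, coe_ofNat_quaternion]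

theorem contDiff_Qcs (s : ℍ[ℝ]) {n : WithTop ℕ∞} : ContDiff ℝ n (Qcs s) := by
  rw [funext (Qcs_eq_smul s)]
  have hinner : ContDiff ℝ n fun y : ℍ[ℝ] => inner ℝ 1 y := (innerSL ℝ 1).contDiff
  have hnorm : ContDiff ℝ n fun y : ℍ[ℝ] => ‖y‖ ^ 2 := contDiff_norm_sq ℝ
  fun_prop

theorem fderiv_Qcs_apply (s x e : ℍ[ℝ]) :
    fderiv ℝ (Qcs s) x e = 2 * ((inner ℝ x e : ℝ) - (e.re : ℍ[ℝ]) * s) := by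
  have hinner := (innerSL ℝ (1 : ℍ[ℝ])).hasFDerivAt (x := x)
  have hnorm := (hasFDerivAt_id (𝕜 := ℝ) x).norm_sq
  have hQ := (((hinner.const_mul 2).smul_const s).const_sub (s ^ 2)).add
    (hnorm.smul_const (1 : ℍ[ℝ]))
  rw [(hQ.congr_of_eventuallyEq (.of_forall (Qcs_eq_smul s))).fderiv,
    Quaternion.coe_mul_eq_smul, ← mul_one ((inner ℝ x e : ℝ) : ℍ[ℝ]),
    Quaternion.coe_mul_eq_smul, ← coe_ofNat_quaternion, Quaternion.coe_mul_eq_smul,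
    ← inner_one_right e, real_inner_comm 1 e]
  simp only [id_eq, ContinuousLinearMap.comp_id, add_apply, neg_apply,
    ContinuousLinearMap.smulRight_apply, smul_apply, coe_innerSL_apply, smul_eq_mul, nsmul_eq_mul,
    Nat.cast_ofNat]
  module

theorem commute_fderiv_Qcs_Qcs (s x e : ℍ[ℝ]) : Commute (fderiv ℝ (Qcs s) x e) (Qcs s x) := by
  have hcoe (r : ℝ) (q : ℍ[ℝ]) : Commute (r : ℍ[ℝ]) q := Quaternion.coe_commutes r q
  have hs : Commute s (Qcs s x) := by
    rw [Qcs]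
    exact (((Commute.refl s).pow_right 2).sub_right (((Commute.ofNat_right s 2).mul_right
      (hcoe _ s).symm).mul_right (Commute.refl s))).add_right (hcoe _ s).symm
  rw [fderiv_Qcs_apply]
  exact (Commute.ofNat_left 2 _).mul_left ((hcoe _ _).sub_left ((hcoe _ _).mul_left hs))

theorem fderiv_fderiv_Qcs_apply (s x e : ℍ[ℝ]) :
    fderiv ℝ (fun y => fderiv ℝ (Qcs s) y e) x e = 2 * ((inner ℝ e e : ℝ) : ℍ[ℝ]) := by
  have hinner : HasFDerivAt (fun y : ℍ[ℝ] => ((inner ℝ y e : ℝ) : ℍ[ℝ]))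
      (algebraMapCLM ℝ ℍ[ℝ] ∘L innerSL ℝ e) x :=
    (algebraMapCLM ℝ ℍ[ℝ] ∘L innerSL ℝ e).hasFDerivAt.congr_of_eventuallyEq
      (.of_forall fun y => congrArg _ (real_inner_comm e y))
  rw [funext (fderiv_Qcs_apply s · e), ((hinner.sub_const _).const_mul 2).fderiv]
  rfl

theorem lap_Qcs (s x : ℍ[ℝ]) : lap (Qcs s) x = 8 := by
  simp only [lap, fderiv_fderiv_Qcs_apply, inner_one_right, inner_qi_right, inner_qj_right,
    inner_qk_right]
  norm_num [components_qi, components_qj, components_qk]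

theorem fderiv_Qcs_one (s x : ℍ[ℝ]) : fderiv ℝ (Qcs s) x 1 = 2 * (x.re - s) := by
  rw [fderiv_Qcs_apply, inner_one_right, Quaternion.re_one, Quaternion.coe_one, one_mul]

theorem fderiv_Qcs_qi (s x : ℍ[ℝ]) : fderiv ℝ (Qcs s) x qi = 2 * (x.imI : ℍ[ℝ]) := by
  simp [fderiv_Qcs_apply, inner_qi_right, components_qi]

theorem fderiv_Qcs_qj (s x : ℍ[ℝ]) : fderiv ℝ (Qcs s) x qj = 2 * (x.imJ : ℍ[ℝ]) := by
  simp [fderiv_Qcs_apply, inner_qj_right, components_qj]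

theorem fderiv_Qcs_qk (s x : ℍ[ℝ]) : fderiv ℝ (Qcs s) x qk = 2 * (x.imK : ℍ[ℝ]) := by
  simp [fderiv_Qcs_apply, inner_qk_right, components_qk]

theorem carreDuChamp_Qcs_self (s x : ℍ[ℝ]) : carreDuChamp (Qcs s) (Qcs s) x = 4 * Qcs s x := by
  have hcomm : s * (x.re : ℍ[ℝ]) = x.re * s := (Quaternion.coe_commutes x.re s).symm
  simp only [carreDuChamp, fderiv_Qcs_one, fderiv_Qcs_qi, fderiv_Qcs_qj, fderiv_Qcs_qk, Qcs,
    ← real_inner_self_eq_norm_sq, inner_eq_components, Quaternion.coe_add, Quaternion.coe_mul]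
  noncomm_ring [hcomm]

theorem lap_Qcs_inv {s x : ℍ[ℝ]} (hx : Qcs s x ≠ 0) : lap (fun y => (Qcs s y)⁻¹) x = 0 := by
  rw [lap_inv (contDiff_Qcs s).contDiffAt hx (commute_fderiv_Qcs_Qcs s x), carreDuChamp_Qcs_self,
    lap_Qcs, ← mul_assoc, mul_inv_cancel_right₀ hx]
  norm_num

instance quaternionStarModule {R : Type*} [CommRing R] [StarRing R] [TrivialStar R] :
    StarModule R ℍ[R] :=
  ⟨fun r q => by simp⟩

theorem contDiff_sub_star (s : ℍ[ℝ]) {n : WithTop ℕ∞} :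
    ContDiff ℝ n (fun y : ℍ[ℝ] => s - star y) :=
  contDiff_const.sub (starL' ℝ : ℍ[ℝ] ≃L[ℝ] ℍ[ℝ]).contDiff

theorem fderiv_sub_star_apply (s x e : ℍ[ℝ]) :
    fderiv ℝ (fun y : ℍ[ℝ] => s - star y) x e = -star e := by
  rw [fderiv_const_sub, neg_apply]
  exact congrArg (fun L => -L e) (starL' ℝ : ℍ[ℝ] ≃L[ℝ] ℍ[ℝ]).fderiv

theorem lap_sub_star (s x : ℍ[ℝ]) : lap (fun y => s - star y) x = 0 := by
  simp [lap, fderiv_sub_star_apply]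

theorem carreDuChamp_sub_star_Qcs (s x : ℍ[ℝ]) :
    carreDuChamp (fun y => s - star y) (Qcs s) x = 2 * (s - star x) := by
  simp only [carreDuChamp, fderiv_sub_star_apply, fderiv_Qcs_one, fderiv_Qcs_qi, fderiv_Qcs_qj,
    fderiv_Qcs_qk, star_one, star_eq_sum_components x]
  noncomm_ring

/-- Let `S(y) = (s − ȳ)·Q_{c,s}(y)⁻¹` be the left slice-hyperholomorphic Cauchy kernel in
form II.  On the open set `U = {y : Q_{c,s}(y) ≠ 0}` the function `S` is infinitely
differentiable, and for every `x ∈ U` its Laplacian equals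
`−4·(s − x̄)·Q_{c,s}(x)^{−2}`. -/
theorem statement13 (s : ℍ[ℝ]) :
    IsOpen {y : ℍ[ℝ] | Qcs s y ≠ 0} ∧
    ContDiffOn ℝ (⊤ : ℕ∞) (fun y => (s - star y) * (Qcs s y)⁻¹) {y : ℍ[ℝ] | Qcs s y ≠ 0} ∧
    ∀ x ∈ {y : ℍ[ℝ] | Qcs s y ≠ 0},
      lap (fun y => (s - star y) * (Qcs s y)⁻¹) x
        = (-4 : ℍ[ℝ]) * ((s - star x) * Qcs s x ^ (-2 : ℤ)) := by
  have hQinv {n : WithTop ℕ∞} {y : ℍ[ℝ]} (hy : Qcs s y ≠ 0) :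
      ContDiffAt ℝ n (fun y => (Qcs s y)⁻¹) y :=
    contDiffAt_fun_inv' (contDiff_Qcs s).contDiffAt hy
  refine ⟨isOpen_ne_fun (contDiff_Qcs s (n := 0)).continuous continuous_const, fun x hx =>
    ((contDiff_sub_star s).contDiffAt.mul (hQinv hx)).contDiffWithinAt, fun x hx => ?_⟩
  calc
    _ = 2 * carreDuChamp (fun y => s - star y) (fun y => (Qcs s y)⁻¹) x := by
      rw [lap_mul (contDiff_sub_star s).contDiffAt (hQinv hx), lap_Qcs_inv hx, lap_sub_star,
        mul_zero, zero_mul, zero_add, add_zero]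
    _ = -2 * (2 * (s - star x) * (Qcs s x ^ 2)⁻¹) := by
      rw [carreDuChamp_inv_right ((contDiff_Qcs s).differentiable one_ne_zero x) hx
        (commute_fderiv_Qcs_Qcs s x), carreDuChamp_sub_star_Qcs, mul_neg, neg_mul]
    _ = _ := by
      rw [zpow_neg, zpow_ofNat]
      noncomm_ring
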